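/- Let A₁, A₂ be real 2×2 matrices and let P₀ = ℝ², P₁ = (A₁+iI)ℝ², P₂ = (A₂+iI)ℝ² be totally-real planes in ℂ² (i.e., Pⱼ ∩ iPⱼ = {0} for j = 0,1,2). Assume that each of the pairwise unions P₀ ∪ P₁, P₀ ∪ P₂, P₁ ∪ P₂ is locally polynomially convex at the origin, that |det Aⱼ| ≤ 1 and det Aⱼ < 0 for j = 1,2, and that det[A₁,A₂] > 0. Then P₀ ∪ P₁ ∪ P₂ is locally polynomially convex at the origin. -/

import Mathlib

open Complex ComplexConjugate

/-- The polynomially convex hull of a set `K ⊆ ℂ²`. -/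
def polyHull2 (K : Set (ℂ × ℂ)) : Set (ℂ × ℂ) :=
  { z | ∀ p : MvPolynomial (Fin 2) ℂ,
      ‖MvPolynomial.eval (fun i => if i = 0 then z.1 else z.2) p‖ ≤
        sSup ((fun w : ℂ × ℂ =>
          ‖MvPolynomial.eval (fun i => if i = 0 then w.1 else w.2) p‖) '' K) }

/-- A set `K ⊆ ℂ²` is polynomially convex if it equals its polynomially convex hull. -/
def PolyConvex2 (K : Set (ℂ × ℂ)) : Prop := polyHull2 K = K

/-- The closed Euclidean ball of radius `r` centred at the origin in `ℂ²`. -/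
def eClosedBall (r : ℝ) : Set (ℂ × ℂ) := { z | ‖z.1‖ ^ 2 + ‖z.2‖ ^ 2 ≤ r ^ 2 }

/-- A set is locally polynomially convex at the origin. -/
def LocPolyConvexAt0 (E : Set (ℂ × ℂ)) : Prop :=
  ∃ r > (0 : ℝ), PolyConvex2 (E ∩ eClosedBall r)

/-- The standard real plane `ℝ² = {(x,y) : x, y ∈ ℝ} ⊆ ℂ²`. -/
def plane0 : Set (ℂ × ℂ) := { zw | ∃ x y : ℝ, zw = ((x : ℂ), (y : ℂ)) }

/-- The plane `(A + iI)ℝ² ⊆ ℂ²` for a real `2×2` matrix `A`. -/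
def planeOf (A : Matrix (Fin 2) (Fin 2) ℝ) : Set (ℂ × ℂ) :=
  { zw | ∃ x y : ℝ,
      zw = (((A 0 0 * x + A 0 1 * y : ℝ) : ℂ) + Complex.I * (x : ℂ),
            ((A 1 0 * x + A 1 1 * y : ℝ) : ℂ) + Complex.I * (y : ℂ)) }

/-- A subset `S ⊆ ℂ²` is totally real if `S ∩ iS = {0}`. -/
def TotallyRealSet (S : Set (ℂ × ℂ)) : Prop :=
  S ∩ ((fun v => Complex.I • v) '' S) = {0}

/-!
Since `[A₁, A₂]` and `[A₁, A₂] Aⱼ` have trace zero, multiplying them by a rotation `J` through a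
right angle gives symmetric matrices. As `det [A₁, A₂] > 0`, the matrix `B = ± J [A₁, A₂]` is
positive definite, and `B Aⱼ` is symmetric. By Cayley-Hamilton the quadratic form `p z = zᵀ B z`
satisfies `p ((Aⱼ + i I) v) = tr Aⱼ · s - (1 + det Aⱼ) vᵀ B v + 2 i s` with `s = vᵀ B Aⱼ v`. So `p`
maps `ℝ²` to `[0, ∞)`, vanishing only at the origin, and maps `P₁ ∪ P₂` to a sector
`Re ≤ k |Im|`.

The conclusion is then an instance of Kallin's lemma. A point of the hull of `K ∪ L` is a character
`φ` of the uniform algebra of `K ∪ L`. Suitable complex multiples of `p` have square roots in that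
algebra, and combining these roots with `p` yields an element `g` with `g = p` on `K` and `g = 0` on
`L`. If `φ g ≠ 0`, letting `n → ∞` in `|φ f| ^ n |φ g| ≤ ‖f ^ n g‖` bounds `|φ f|` by the supremum
of `|f|` over `K`. If `φ g = 0`, then `1 - c g` peaks on `{g = 0}` for small `c > 0`, and its powers
bound `|φ f|` by the supremum over `L`.
-/

section LogarithmInBanachAlgebra

variable {A : Type*} [NormedRing A] [NormedAlgebra ℂ A] {b : A}

lemma isUnit_one_add_smul_sub_one (hb : spectrum ℂ b ⊆ slitPlane) {t : ℝ}
    (ht : t ∈ Set.Icc (0 : ℝ) 1) : IsUnit (1 + t • (b - 1)) := by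
  rcases ht.1.eq_or_lt with rfl | ht0
  · simp
  have hneg : (((t - 1) / t : ℝ) : ℂ) ∉ spectrum ℂ b := fun h =>
    (ofReal_mem_slitPlane.mp (hb h)).not_ge
      (div_nonpos_of_nonpos_of_nonneg (by linarith [ht.2]) ht0.le)
  have hunit : IsUnit (algebraMap ℂ A ((t - 1) / t : ℝ) - b) := spectrum.notMem_iff.mp hneg
  have ht' : (t : ℂ) ≠ 0 := ofReal_ne_zero.mpr ht0.ne'
  have hfactor : 1 + t • (b - 1) =
      Units.mk0 (-t : ℂ) (neg_ne_zero.mpr ht') • (algebraMap ℂ A ((t - 1) / t : ℝ) - b) := by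
    rw [Units.smul_def, Units.val_mk0, Algebra.algebraMap_eq_smul_one, ← coe_smul]
    match_scalars
    · field_simp
      ring
    · ring
  rw [hfactor]
  exact (isUnit_smul_iff _ _).mpr hunit

variable [CompleteSpace A]

lemma exists_forall_map_eq_log (hb : spectrum ℂ b ⊆ slitPlane) :
    ∃ L : A, ∀ φ : A →ₐ[ℂ] ℂ, φ L = Complex.log (φ b) := by
  let resolvent : ℝ → A := fun t => Ring.inverse (1 + t • (b - 1))
  have hcont : ContinuousOn resolvent (Set.uIcc 0 1) := fun t ht => by
    rw [Set.uIcc_of_le zero_le_one] at ht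
    obtain ⟨u, hu⟩ := isUnit_one_add_smul_sub_one hb ht
    have hinv : ContinuousAt Ring.inverse (1 + t • (b - 1)) :=
      hu ▸ NormedRing.inverse_continuousAt u
    exact (hinv.comp (f := fun s : ℝ => 1 + s • (b - 1)) (by fun_prop)).continuousWithinAt
  refine ⟨(b - 1) * ∫ t in (0 : ℝ)..1, resolvent t, fun φ => ?_⟩
  have hφb : 1 + (φ b - 1) ∈ slitPlane := by
    simpa only [add_sub_cancel] using hb (AlgHom.apply_mem_spectrum φ b)
  have hφ : ∀ t ∈ Set.uIcc (0 : ℝ) 1, φ (resolvent t) = (1 + t • (φ b - 1))⁻¹ := fun t ht => by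
    rw [Set.uIcc_of_le zero_le_one] at ht
    obtain ⟨u, hu⟩ := isUnit_one_add_smul_sub_one hb ht
    have hφu : φ u = 1 + t • (φ b - 1) := by
      rw [hu, map_add, map_one, ← coe_smul, map_smul, map_sub, map_one, coe_smul]
    simp only [resolvent]
    rw [← hφu, ← hu, Ring.inverse_unit]
    exact eq_inv_of_mul_eq_one_left (by rw [← map_mul, Units.inv_mul, map_one])
  calc φ ((b - 1) * ∫ t in (0 : ℝ)..1, resolvent t)
      = (φ b - 1) * φ.toContinuousLinearMap (∫ t in (0 : ℝ)..1, resolvent t) := by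
        rw [map_mul, map_sub, map_one, AlgHom.coe_toContinuousLinearMap]
    _ = (φ b - 1) * ∫ t in (0 : ℝ)..1, (1 + t • (φ b - 1))⁻¹ := by
        rw [← ContinuousLinearMap.intervalIntegral_comp_comm _ hcont.intervalIntegrable]
        exact congrArg _ (intervalIntegral.integral_congr hφ)
    _ = Complex.log (φ b) := by rw [← log_eq_integral hφb, add_sub_cancel]

lemma exists_forall_map_eq_cpow (hb : spectrum ℂ b ⊆ slitPlane) (w : ℂ) :
    ∃ c : A, ∀ φ : A →ₐ[ℂ] ℂ, φ c = φ b ^ w := by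
  obtain ⟨L, hL⟩ := exists_forall_map_eq_log hb
  let _ : NormedAlgebra ℚ A := .restrictScalars ℚ ℂ A
  refine ⟨NormedSpace.exp (w • L), fun φ => ?_⟩
  have hφb : φ b ≠ 0 := slitPlane_ne_zero (hb (AlgHom.apply_mem_spectrum φ b))
  rw [NormedSpace.map_exp φ φ.toContinuousLinearMap.continuous, ← Complex.exp_eq_exp_ℂ, map_smul,
    hL, smul_eq_mul, mul_comm, cpow_def_of_ne_zero hφb]

end LogarithmInBanachAlgebra

section ClosedSubalgebra

lemma disjoint_spectrum_of_isPreconnected {B : Type*} [NormedRing B] [NormedAlgebra ℂ B]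
    [CompleteSpace B] (A : Subalgebra ℂ B) [IsClosed (A : Set B)] {a : A} {s : Set ℂ}
    (hs : IsPreconnected s) (hs' : ¬ Bornology.IsBounded s) (ha : Disjoint s (spectrum ℂ (a : B))) :
    Disjoint s (spectrum ℂ a) :=
  Set.disjoint_left.mpr fun _ hzs hz => hs' <|
    (Subalgebra.spectrum_isBounded_connectedComponentIn A a hz).subset
      (hs.subset_connectedComponentIn hzs ha.subset_compl_right)

lemma isPreconnected_compl_slitPlane : IsPreconnected slitPlaneᶜ := by
  have himage : slitPlaneᶜ = ofReal '' Set.Iic 0 := by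
    ext z
    simp only [Set.mem_compl_iff, mem_slitPlane_iff, not_or, not_lt, not_not, Set.mem_image,
      Set.mem_Iic]
    exact ⟨fun h => ⟨z.re, h.1, Complex.ext rfl h.2.symm⟩, by rintro ⟨r, hr, rfl⟩; exact ⟨hr, rfl⟩⟩
  rw [himage]
  exact isPreconnected_Iic.image _ continuous_ofReal.continuousOn

lemma not_isBounded_compl_slitPlane : ¬ Bornology.IsBounded slitPlaneᶜ := fun h => by
  obtain ⟨C, hC⟩ := h.exists_norm_le
  have hmem : ((-(|C| + 1) : ℝ) : ℂ) ∈ slitPlaneᶜ := fun h => by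
    linarith [ofReal_mem_slitPlane.mp h, abs_nonneg C]
  have := hC _ hmem
  rw [norm_real, Real.norm_eq_abs, abs_neg, abs_of_pos (by positivity)] at this
  linarith [le_abs_self C]

variable {X : Type*} [TopologicalSpace X] [CompactSpace X] {A : Subalgebra ℂ C(X, ℂ)}
  [IsClosed (A : Set C(X, ℂ))]

lemma spectrum_subset_slitPlane {f : A} (hf : ∀ x, (f : C(X, ℂ)) x ∈ slitPlane) :
    spectrum ℂ f ⊆ slitPlane := by
  refine Set.disjoint_compl_left_iff_subset.mp <| disjoint_spectrum_of_isPreconnected A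
    isPreconnected_compl_slitPlane not_isBounded_compl_slitPlane ?_
  rw [ContinuousMap.spectrum_eq_range, Set.disjoint_compl_left_iff_subset]
  exact Set.range_subset_iff.mpr hf

lemma exists_mem_apply_eq_cpow_of_mem_slitPlane {f : C(X, ℂ)} (hfA : f ∈ A)
    (hf : ∀ x, f x ∈ slitPlane) (w : ℂ) : ∃ g ∈ A, ∀ x, g x = f x ^ w := by
  have : CompleteSpace A := ‹IsClosed (A : Set C(X, ℂ))›.completeSpace_coe
  obtain ⟨g, hg⟩ :=
    exists_forall_map_eq_cpow (A := A) (spectrum_subset_slitPlane (f := ⟨f, hfA⟩) hf) w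
  exact ⟨g, g.2, fun x => hg ((ContinuousMap.evalAlgHom ℂ ℂ x).comp A.val)⟩

lemma exists_mem_apply_eq_cpow {f : C(X, ℂ)} (hfA : f ∈ A)
    (hf : ∀ x, 0 ≤ (f x).re ∨ (f x).im ≠ 0) {w : ℂ} (hw : 0 < w.re) :
    ∃ g ∈ A, ∀ x, g x = f x ^ w := by
  let F : C(NNReal × X, ℂ) :=
    ⟨fun q => (f q.2 + (q.1 : ℝ)) ^ w, continuous_iff_continuousAt.mpr fun q => by
      refine (continuousAt_cpow_const_of_re_pos ?_ hw).comp
        (f := fun q : NNReal × X => f q.2 + ((q.1 : ℝ) : ℂ)) (by fun_prop)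
      rw [add_re, add_im, ofReal_re, ofReal_im, add_zero]
      exact (hf q.2).imp_left (add_nonneg · q.1.2)⟩
  have hFpos : ∀ d : NNReal, 0 < d → F.curry d ∈ A := fun d hd => by
    have hslit : ∀ x, (f + algebraMap ℂ C(X, ℂ) (d : ℝ)) x ∈ slitPlane := fun x => by
      simpa [mem_slitPlane_iff] using
        (hf x).imp_left fun h => add_pos_of_nonneg_of_pos h (NNReal.coe_pos.mpr hd)
    obtain ⟨g, hgA, hg⟩ := exists_mem_apply_eq_cpow_of_mem_slitPlane
      (A.add_mem hfA (A.algebraMap_mem _)) hslit w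
    have hgF : F.curry d = g := ContinuousMap.ext fun x => (hg x).symm
    exact hgF ▸ hgA
  refine ⟨F.curry 0, ?_, fun x => by simp [F]⟩
  exact ‹IsClosed (A : Set C(X, ℂ))›.mem_of_tendsto
    (F.curry.continuous.continuousWithinAt (s := Set.Ioi 0)).tendsto
    (Filter.eventually_of_mem self_mem_nhdsWithin hFpos)

end ClosedSubalgebra

section Sector

open scoped ComplexOrder

/-- `a` is the principal square root of `z`, and `z` is not a negative real number: these are the
`z` at which `z ↦ z ^ (2⁻¹ : ℂ)` is continuous. -/
structure IsPrincipalSqrt (a z : ℂ) : Prop where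
  sq_eq : a ^ 2 = z
  re_pos_or_eq_zero : 0 < a.re ∨ a = 0

lemma IsPrincipalSqrt.cpow_two_inv_eq {a z : ℂ} (h : IsPrincipalSqrt a z) :
    z ^ (2⁻¹ : ℂ) = a := by
  rw [← h.sq_eq]
  rcases h.re_pos_or_eq_zero with ha | rfl
  · exact sq_cpow_two_inv ha
  · simp

lemma IsPrincipalSqrt.re_nonneg_or_im_ne_zero {a z : ℂ} (h : IsPrincipalSqrt a z) :
    0 ≤ z.re ∨ z.im ≠ 0 := by
  rw [← h.sq_eq, sq, mul_re, mul_im]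
  rcases h.re_pos_or_eq_zero with ha | rfl
  · rcases eq_or_ne a.im 0 with him | him
    · left; rw [him]; nlinarith
    · right
      rw [mul_comm a.im, ← two_mul]
      exact mul_ne_zero two_ne_zero (mul_ne_zero ha.ne' him)
  · simp

/-- The closed sector `Re z ≤ k |Im z|`, which for `0 ≤ k` contains the negative real axis and meets
the positive one only at the vertex `0`. -/
def sector (k : ℝ) : Set ℂ := {z | z.re ≤ k * |z.im|}

lemma sector_mono : Monotone sector := fun _ _ hkl _ hz =>
  le_trans hz (mul_le_mul_of_nonneg_right hkl (abs_nonneg _))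

lemma exists_sq_eq_neg_of_mem_sector {k : ℝ} (hk : 0 ≤ k) {z : ℂ} (hz : z ∈ sector k) :
    ∃ σ : ℂ, σ ^ 2 = -z ∧ (|σ.im| < (2 * k + 2) * σ.re ∨ σ = 0) := by
  obtain ⟨σ, hσ, hre⟩ : ∃ σ : ℂ, σ ^ 2 = -z ∧ 0 ≤ σ.re := by
    obtain ⟨σ, hσ⟩ := IsAlgClosed.exists_pow_nat_eq (-z) two_pos
    rcases le_total 0 σ.re with h | h
    · exact ⟨σ, hσ, h⟩
    · exact ⟨-σ, by rw [neg_sq, hσ], by simpa using h⟩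
  refine ⟨σ, hσ, or_iff_not_imp_left.mpr fun hle => ?_⟩
  have hzσ : |σ.im| ^ 2 - σ.re ^ 2 ≤ k * (2 * (σ.re * |σ.im|)) := by
    have hz' : z = -(σ * σ) := by rw [← sq, hσ, neg_neg]
    have him : |z.im| = 2 * (σ.re * |σ.im|) := by
      rw [hz', neg_im, mul_im, abs_neg, mul_comm σ.im, ← two_mul, abs_mul, abs_mul, abs_two,
        abs_of_nonneg hre]
    rw [← him, sq_abs]
    convert (show z.re ≤ k * |z.im| from hz) using 1
    rw [hz', neg_re, mul_re]
    ring
  have hre0 : σ.re = 0 := by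
    nlinarith [mul_nonneg hk hre, mul_le_mul_of_nonneg_left (not_lt.mp hle) (abs_nonneg σ.im)]
  have him0 : σ.im = 0 := by
    rw [hre0] at hzσ
    nlinarith [sq_abs σ.im]
  exact Complex.ext hre0 him0

/-! Both `-β² z` and `-β̄² z` have a principal square root when `z` lies on the positive ray or in
the sector, and the product of the two roots is `|β|² z` on the ray but `-|β|² z` in the sector. -/

lemma exists_isPrincipalSqrt_of_nonneg {β z : ℂ} (hβ : 0 < β.im) (hz : 0 ≤ z) :
    ∃ a b, IsPrincipalSqrt a (-β ^ 2 * z) ∧ IsPrincipalSqrt b (-conj β ^ 2 * z) ∧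
      a * b = normSq β * z := by
  obtain ⟨r, hr, rfl⟩ : ∃ r : ℝ, 0 ≤ r ∧ z = (r : ℂ) ^ 2 :=
    ⟨√z.re, Real.sqrt_nonneg _, by
      rw [← ofReal_pow, Real.sq_sqrt (nonneg_iff.mp hz).1]
      exact Complex.ext rfl (nonneg_iff.mp hz).2.symm⟩
  have hpos : 0 < β.im * r ∨ r = 0 := hr.eq_or_lt'.symm.imp_left (mul_pos hβ)
  refine ⟨-I * β * r, I * conj β * r, ⟨?_, ?_⟩, ⟨?_, ?_⟩, ?_⟩
  · linear_combination (β ^ 2 * r ^ 2) * I_sq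
  · exact hpos.imp (by simp) (by rintro rfl; simp)
  · linear_combination (conj β ^ 2 * r ^ 2) * I_sq
  · exact hpos.imp (by simp) (by rintro rfl; simp)
  · rw [normSq_eq_conj_mul_self]
    linear_combination (-(conj β * β * r ^ 2)) * I_sq

lemma exists_isPrincipalSqrt_of_mem_sector {k : ℝ} (hk : 0 ≤ k) {z : ℂ} (hz : z ∈ sector k) {β : ℂ}
    (hβ : β = (2 * k + 2 : ℝ) + I) :
    ∃ a b, IsPrincipalSqrt a (-β ^ 2 * z) ∧ IsPrincipalSqrt b (-conj β ^ 2 * z) ∧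
      a * b = -(normSq β * z) := by
  obtain ⟨σ, hσ, hσ'⟩ := exists_sq_eq_neg_of_mem_sector hk hz
  have hconj : conj β = (2 * k + 2 : ℝ) - I := by
    rw [hβ, map_add, conj_ofReal, conj_I, sub_eq_add_neg]
  refine ⟨β * σ, conj β * σ, ⟨?_, hσ'.imp (fun h => ?_) ?_⟩, ⟨?_, hσ'.imp (fun h => ?_) ?_⟩, ?_⟩
  · linear_combination β ^ 2 * hσ
  · rw [hβ, add_mul, add_re, re_ofReal_mul, I_mul_re]
    linarith [le_abs_self σ.im]
  · rintro rfl; exact mul_zero _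
  · linear_combination conj β ^ 2 * hσ
  · rw [hconj, sub_mul, sub_re, re_ofReal_mul, I_mul_re]
    linarith [neg_abs_le σ.im]
  · rintro rfl; exact mul_zero _
  · rw [normSq_eq_conj_mul_self]
    linear_combination (conj β * β) * hσ

variable {X : Type*} [TopologicalSpace X] [CompactSpace X] {A : Subalgebra ℂ C(X, ℂ)}
  [IsClosed (A : Set C(X, ℂ))]

lemma exists_mem_eqOn_nonneg_eqOn_sector {k : ℝ} (hk : 0 ≤ k) {p : C(X, ℂ)} (hpA : p ∈ A)
    (hp : ∀ x, 0 ≤ p x ∨ p x ∈ sector k) :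
    ∃ g ∈ A, (∀ x, 0 ≤ p x → g x = p x) ∧ ∀ x, p x ∈ sector k → g x = 0 := by
  set β : ℂ := (2 * k + 2 : ℝ) + I with hβ
  have hβim : 0 < β.im := by simp [hβ]
  have hβ0 : (normSq β : ℂ) ≠ 0 :=
    ofReal_ne_zero.mpr (normSq_pos.mpr fun h => hβim.ne' (by rw [h, zero_im])).ne'
  have hroots : ∀ x, ∃ a b, IsPrincipalSqrt a (-β ^ 2 * p x) ∧
      IsPrincipalSqrt b (-conj β ^ 2 * p x) := fun x => by
    rcases hp x with hx | hx
    · obtain ⟨a, b, ha, hb, -⟩ := exists_isPrincipalSqrt_of_nonneg hβim hx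
      exact ⟨a, b, ha, hb⟩
    · obtain ⟨a, b, ha, hb, -⟩ := exists_isPrincipalSqrt_of_mem_sector hk hx hβ
      exact ⟨a, b, ha, hb⟩
  choose a b ha hb using hroots
  obtain ⟨g₁, hg₁A, hg₁⟩ := exists_mem_apply_eq_cpow (w := 2⁻¹) (A.smul_mem hpA (-β ^ 2))
    (fun x => (ha x).re_nonneg_or_im_ne_zero) (by norm_num)
  obtain ⟨g₂, hg₂A, hg₂⟩ := exists_mem_apply_eq_cpow (w := 2⁻¹) (A.smul_mem hpA (-conj β ^ 2))
    (fun x => (hb x).re_nonneg_or_im_ne_zero) (by norm_num)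
  have hprod : ∀ x a b, IsPrincipalSqrt a (-β ^ 2 * p x) → IsPrincipalSqrt b (-conj β ^ 2 * p x) →
      g₁ x * g₂ x = a * b := fun x a b ha hb => by
    rw [← ha.cpow_two_inv_eq, ← hb.cpow_two_inv_eq]
    exact congrArg₂ (· * ·) (hg₁ x) (hg₂ x)
  refine ⟨(2⁻¹ : ℂ) • (p + (normSq β : ℂ)⁻¹ • (g₁ * g₂)), A.smul_mem (A.add_mem hpA <|
    A.smul_mem (A.mul_mem hg₁A hg₂A) _) _, fun x hx => ?_, fun x hx => ?_⟩
  · obtain ⟨a, b, ha, hb, hab⟩ := exists_isPrincipalSqrt_of_nonneg hβim hx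
    change 2⁻¹ * (p x + (normSq β : ℂ)⁻¹ * (g₁ x * g₂ x)) = p x
    rw [hprod x a b ha hb, hab]
    field_simp
    ring
  · obtain ⟨a, b, ha, hb, hab⟩ := exists_isPrincipalSqrt_of_mem_sector hk hx hβ
    change 2⁻¹ * (p x + (normSq β : ℂ)⁻¹ * (g₁ x * g₂ x)) = 0
    rw [hprod x a b ha hb, hab]
    field_simp
    ring

end Sector

section Characters

open scoped ComplexOrder

variable {X : Type*} [TopologicalSpace X] {A : Subalgebra ℂ C(X, ℂ)}

/-- `|φ f|` is at most the supremum of `|f|` over `s`, for every `f ∈ A`. The side condition `0 ≤ m`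
makes this fail for `s = ∅`. -/
def DominatedOn (φ : A →ₐ[ℂ] ℂ) (s : Set X) : Prop :=
  ∀ (f : A) (m : ℝ), 0 ≤ m → (∀ x ∈ s, ‖(f : C(X, ℂ)) x‖ ≤ m) → ‖φ f‖ ≤ m

lemma DominatedOn.mono {φ : A →ₐ[ℂ] ℂ} {s t : Set X} (h : DominatedOn φ s) (hst : s ⊆ t) :
    DominatedOn φ t :=
  fun f m hm hf => h f m hm fun x hx => hf x (hst hx)

lemma le_of_forall_pow_mul_le {a m c C : ℝ} (hm : 0 ≤ m) (hc : 0 < c)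
    (h : ∀ n : ℕ, a ^ n * c ≤ m ^ n * C) : a ≤ m := by
  by_contra! hma
  have ha : 0 < a := hm.trans_lt hma
  have hratio : ∀ n : ℕ, c ≤ (m / a) ^ n * C := fun n => by
    rw [div_pow, div_mul_eq_mul_div, le_div_iff₀ (pow_pos ha n), mul_comm]
    exact h n
  have hlim : Filter.Tendsto (fun n : ℕ => (m / a) ^ n * C) Filter.atTop (nhds (0 * C)) :=
    (tendsto_pow_atTop_nhds_zero_of_lt_one (div_nonneg hm ha.le)
      ((div_lt_one ha).mpr hma)).mul_const C
  exact hc.not_ge (by simpa using ge_of_tendsto' hlim hratio)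

variable [CompactSpace X]

lemma exists_forall_norm_pow_mul_lt {q f : C(X, ℂ)} {M : ℝ} (hM : 0 < M) (hq : ∀ x, ‖q x‖ ≤ 1)
    (hf : ∀ x, ‖q x‖ = 1 → ‖f x‖ < M) : ∃ n : ℕ, ∀ x, ‖(q ^ n * f) x‖ < M := by
  let U : ℕ → Set X := fun n => {x | ‖q x‖ ^ n * ‖f x‖ < M}
  have hopen : ∀ n, IsOpen (U n) := fun n => isOpen_lt (by fun_prop) continuous_const
  have hmono : Monotone U := fun i j hij x hx => lt_of_le_of_lt
    (mul_le_mul_of_nonneg_right (pow_le_pow_of_le_one (norm_nonneg _) (hq x) hij)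
      (norm_nonneg _)) hx
  have hcover : Set.univ ⊆ ⋃ n, U n := fun x _ => Set.mem_iUnion.mpr <| by
    rcases (hq x).eq_or_lt with hx | hx
    · exact ⟨0, by simpa [U] using hf x hx⟩
    · have hlim := (tendsto_pow_atTop_nhds_zero_of_lt_one (norm_nonneg (q x)) hx).mul_const ‖f x‖
      rw [zero_mul] at hlim
      exact (hlim.eventually (gt_mem_nhds hM)).exists
  obtain ⟨n, hn⟩ := isCompact_univ.elim_directed_cover U hopen hcover hmono.directed_le
  exact ⟨n, fun x => by simpa [U] using hn (Set.mem_univ x)⟩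

variable [IsClosed (A : Set C(X, ℂ))]

lemma norm_map_le (φ : A →ₐ[ℂ] ℂ) (f : A) : ‖φ f‖ ≤ ‖f‖ := by
  have : CompleteSpace A := ‹IsClosed (A : Set C(X, ℂ))›.completeSpace_coe
  have hone : ‖(1 : A)‖ ≤ 1 := (ContinuousMap.norm_le _ zero_le_one).mpr fun x => by simp
  exact (AlgHom.norm_apply_le_self_mul_norm_one φ f).trans
    (mul_le_of_le_one_right (norm_nonneg f) hone)

lemma dominatedOn_of_map_ne_zero {φ : A →ₐ[ℂ] ℂ} {g : A} (hg : φ g ≠ 0) :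
    DominatedOn φ {x | (g : C(X, ℂ)) x ≠ 0} := fun f m hm hf => by
  refine le_of_forall_pow_mul_le hm (norm_pos_iff.mpr hg) (C := ‖g‖) fun n => ?_
  rw [← norm_pow, ← norm_mul, ← map_pow, ← map_mul]
  refine (norm_map_le φ _).trans ?_
  refine (ContinuousMap.norm_le _ (by positivity)).mpr fun x => ?_
  change ‖(f : C(X, ℂ)) x ^ n * (g : C(X, ℂ)) x‖ ≤ m ^ n * ‖g‖
  rcases eq_or_ne ((g : C(X, ℂ)) x) 0 with hx | hx
  · rw [hx, mul_zero, norm_zero]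
    positivity
  · rw [norm_mul, norm_pow]
    gcongr
    · exact hf x hx
    · exact ContinuousMap.norm_coe_le_norm (g : C(X, ℂ)) x

lemma dominatedOn_of_map_eq_one {φ : A →ₐ[ℂ] ℂ} {q : A} (hq : ∀ x, ‖(q : C(X, ℂ)) x‖ ≤ 1)
    (hφq : φ q = 1) : DominatedOn φ {x | ‖(q : C(X, ℂ)) x‖ = 1} := fun f m hm hf => by
  refine le_of_forall_pos_le_add fun ε hε => ?_
  obtain ⟨n, hn⟩ := exists_forall_norm_pow_mul_lt (f := f) (by positivity : 0 < m + ε) hq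
    fun x hx => (hf x hx).trans_lt (lt_add_of_pos_right m hε)
  have hφ : φ (q ^ n * f) = φ f := by rw [map_mul, map_pow, hφq, one_pow, one_mul]
  rw [← hφ]
  exact (norm_map_le φ _).trans
    ((ContinuousMap.norm_le _ (by positivity)).mpr fun x => (hn x).le)

lemma dominatedOn_of_map_eq_zero {φ : A →ₐ[ℂ] ℂ} {g : A} (hg : ∀ x, 0 ≤ (g : C(X, ℂ)) x)
    (hφg : φ g = 0) : DominatedOn φ {x | (g : C(X, ℂ)) x = 0} := by
  let R : ℝ := ‖g‖ + 1
  have hRpos : 0 < R := by positivity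
  have hgR : ∀ x, ‖(g : C(X, ℂ)) x‖ / R ≤ 1 := fun x => (div_le_one hRpos).mpr <|
    (ContinuousMap.norm_coe_le_norm (g : C(X, ℂ)) x).trans (le_add_of_nonneg_right zero_le_one)
  let q : A := 1 - algebraMap ℂ A (R⁻¹ : ℝ) * g
  have hq : ∀ x, ‖(q : C(X, ℂ)) x‖ = 1 - ‖(g : C(X, ℂ)) x‖ / R := fun x => by
    have hqx : (q : C(X, ℂ)) x = (1 - ‖(g : C(X, ℂ)) x‖ / R : ℝ) := by
      change 1 - ((R⁻¹ : ℝ) : ℂ) * (g : C(X, ℂ)) x = _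
      rw [div_eq_inv_mul, ofReal_sub, ofReal_one, ofReal_mul, ← eq_coe_norm_of_nonneg (hg x)]
    rw [hqx, norm_real, Real.norm_of_nonneg (sub_nonneg.mpr (hgR x))]
  refine (dominatedOn_of_map_eq_one (q := q) (fun x => ?_) ?_).mono fun x hx => ?_
  · exact (hq x).trans_le (sub_le_self 1 (by positivity))
  · rw [map_sub, map_one, map_mul, hφg, mul_zero, sub_zero]
  · have hgx : ‖(g : C(X, ℂ)) x‖ / R = 0 := sub_eq_self.mp ((hq x).symm.trans hx)
    exact norm_eq_zero.mp ((div_eq_zero_iff.mp hgx).resolve_right hRpos.ne')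

/-- **Kallin's lemma** for characters of a uniform algebra. -/
theorem dominatedOn_or_dominatedOn (φ : A →ₐ[ℂ] ℂ) {k : ℝ} (hk : 0 ≤ k) {p : C(X, ℂ)} (hpA : p ∈ A)
    {s t : Set X} (hst : s ∪ t = Set.univ) (hs : ∀ x ∈ s, 0 ≤ p x) (ht : ∀ x ∈ t, p x ∈ sector k)
    (hzero : ∀ x ∈ s, p x = 0 → x ∈ t) : DominatedOn φ s ∨ DominatedOn φ t := by
  have hmem : ∀ x, x ∈ s ∨ x ∈ t := fun x => hst.symm.subset (Set.mem_univ x)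
  obtain ⟨g, hgA, hgs, hgt⟩ := exists_mem_eqOn_nonneg_eqOn_sector hk hpA
    fun x => (hmem x).imp (hs x) (ht x)
  by_cases hφg : φ ⟨g, hgA⟩ = 0
  · right
    have hg : ∀ x, 0 ≤ g x := fun x => (hmem x).elim
      (fun hx => (hgs x (hs x hx)).symm ▸ hs x hx) (fun hx => (hgt x (ht x hx)).ge)
    exact (dominatedOn_of_map_eq_zero hg hφg).mono fun x hx =>
      (hmem x).elim (fun hxs => hzero x hxs ((hgs x (hs x hxs)).symm.trans hx)) id
  · left
    exact (dominatedOn_of_map_ne_zero hφg).mono fun x hx =>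
      (hmem x).resolve_right fun hxt => hx (hgt x (ht x hxt))

end Characters

section PolynomialHull

open scoped ComplexOrder

lemma exists_algHom_comp_eq_of_denseRange {𝕜 R B D : Type*} [NontriviallyNormedField 𝕜] [Ring R]
    [Algebra 𝕜 R] [NormedRing B] [NormedAlgebra 𝕜 B] [NormedRing D] [NormedAlgebra 𝕜 D]
    [CompleteSpace D] {e : R →ₐ[𝕜] B} (he : DenseRange e) {ψ : R →ₐ[𝕜] D}
    (hψ : ∀ r, ‖ψ r‖ ≤ ‖e r‖) : ∃ φ : B →ₐ[𝕜] D, φ.comp e = ψ := by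
  let Φ : B →L[𝕜] D := ψ.toLinearMap.extendOfNorm e.toLinearMap
  have hΦ : ∀ r, Φ (e r) = ψ r :=
    LinearMap.extendOfNorm_eq he ⟨1, fun r => (hψ r).trans_eq (one_mul _).symm⟩
  have hone : Φ 1 = 1 := by rw [← map_one e, hΦ, map_one]
  have hmul : ∀ a b, Φ (a * b) = Φ a * Φ b := fun a b =>
    he.induction_on₂ (isClosed_eq (by fun_prop) (by fun_prop))
      (fun r s => by rw [← map_mul, hΦ, hΦ, hΦ, map_mul]) a b
  exact ⟨AlgHom.ofLinearMap Φ.toLinearMap hone hmul, AlgHom.ext hΦ⟩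

/-- The coordinates of a point of `ℂ²`, as a point at which polynomials are evaluated. -/
def coords (z : ℂ × ℂ) : Fin 2 → ℂ := fun i => if i = 0 then z.1 else z.2

@[simp] lemma coords_zero (z : ℂ × ℂ) : coords z 0 = z.1 := rfl

@[simp] lemma coords_one (z : ℂ × ℂ) : coords z 1 = z.2 := rfl

lemma continuous_coords : Continuous coords :=
  continuous_pi fun i => by
    fin_cases i
    exacts [continuous_fst, continuous_snd]

lemma continuous_eval_coords (f : MvPolynomial (Fin 2) ℂ) :
    Continuous fun w => MvPolynomial.eval (coords w) f :=
  f.continuous_eval.comp continuous_coords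

lemma mem_polyHull2_iff {K : Set (ℂ × ℂ)} (hK : IsCompact K) {z : ℂ × ℂ} :
    z ∈ polyHull2 K ↔ ∀ (f : MvPolynomial (Fin 2) ℂ) (m : ℝ), 0 ≤ m →
      (∀ w ∈ K, ‖MvPolynomial.eval (coords w) f‖ ≤ m) → ‖MvPolynomial.eval (coords z) f‖ ≤ m := by
  refine ⟨fun hz f m hm hf => (hz f).trans (Real.sSup_le (Set.forall_mem_image.mpr hf) hm),
    fun h f => h f _ (Real.sSup_nonneg (Set.forall_mem_image.mpr fun _ _ => norm_nonneg _))
      fun w hw => le_csSup ?_ (Set.mem_image_of_mem _ hw)⟩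
  exact (hK.image (continuous_eval_coords f).norm).bddAbove

lemma subset_polyHull2 {K : Set (ℂ × ℂ)} (hK : IsCompact K) : K ⊆ polyHull2 K := fun z hz =>
  (mem_polyHull2_iff hK).mpr fun _ _ _ hf => hf z hz

lemma polyConvex2_iff_subset {K : Set (ℂ × ℂ)} (hK : IsCompact K) :
    PolyConvex2 K ↔ polyHull2 K ⊆ K :=
  ⟨fun h => h.subset, fun h => h.antisymm (subset_polyHull2 hK)⟩

lemma isClosed_polyHull2 (K : Set (ℂ × ℂ)) : IsClosed (polyHull2 K) := by
  rw [polyHull2, Set.ofPred_forall]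
  exact isClosed_iInter fun f => isClosed_le (continuous_eval_coords f).norm continuous_const

/-- The restriction of polynomials to a set `K`, as continuous functions on `K`. -/
noncomputable def polyRestrict (K : Set (ℂ × ℂ)) : MvPolynomial (Fin 2) ℂ →ₐ[ℂ] C(K, ℂ) :=
  MvPolynomial.aeval fun i => ⟨fun w => coords w i,
    (continuous_apply i).comp (continuous_coords.comp continuous_subtype_val)⟩

lemma polyRestrict_apply {K : Set (ℂ × ℂ)} (f : MvPolynomial (Fin 2) ℂ) (w : K) :
    polyRestrict K f w = MvPolynomial.eval (coords w) f :=
  (MvPolynomial.comp_aeval_apply _ (ContinuousMap.evalAlgHom ℂ ℂ w) f).trans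
    (congrFun (MvPolynomial.aeval_eq_eval _) f)

/-- The uniform algebra `P(K)`: the uniform closure of the polynomials in the continuous functions
on `K`. -/
noncomputable def polyAlgebra (K : Set (ℂ × ℂ)) [CompactSpace K] : Subalgebra ℂ C(K, ℂ) :=
  (polyRestrict K).range.topologicalClosure

instance (K : Set (ℂ × ℂ)) [CompactSpace K] : IsClosed (polyAlgebra K : Set C(K, ℂ)) :=
  Subalgebra.isClosed_topologicalClosure _

lemma polyRestrict_mem_polyAlgebra {K : Set (ℂ × ℂ)} [CompactSpace K] (f : MvPolynomial (Fin 2) ℂ) :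
    polyRestrict K f ∈ polyAlgebra K :=
  Subalgebra.le_topologicalClosure _ ⟨f, rfl⟩

lemma exists_algHom_polyAlgebra_of_mem_polyHull2 {K : Set (ℂ × ℂ)} [CompactSpace K] {z : ℂ × ℂ}
    (hz : z ∈ polyHull2 K) : ∃ φ : polyAlgebra K →ₐ[ℂ] ℂ, ∀ f : MvPolynomial (Fin 2) ℂ,
      φ ⟨polyRestrict K f, polyRestrict_mem_polyAlgebra f⟩ = MvPolynomial.eval (coords z) f := by
  let e : MvPolynomial (Fin 2) ℂ →ₐ[ℂ] polyAlgebra K :=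
    (polyRestrict K).codRestrict _ polyRestrict_mem_polyAlgebra
  have he : DenseRange e := by
    rw [DenseRange, Subtype.dense_iff, ← Set.range_comp]
    exact subset_rfl
  have hψ : ∀ f, ‖MvPolynomial.aeval (R := ℂ) (coords z) f‖ ≤ ‖e f‖ := fun f => by
    rw [MvPolynomial.aeval_eq_eval]
    refine (mem_polyHull2_iff (isCompact_iff_compactSpace.mpr ‹_›)).mp hz f _ (norm_nonneg _)
      fun w hw => ?_
    rw [← polyRestrict_apply f ⟨w, hw⟩]
    exact ContinuousMap.norm_coe_le_norm (polyRestrict K f) _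
  obtain ⟨φ, hφ⟩ := exists_algHom_comp_eq_of_denseRange he hψ
  exact ⟨φ, fun f => (DFunLike.congr_fun hφ f).trans (by rw [MvPolynomial.aeval_eq_eval])⟩

/-- **Kallin's lemma** for polynomially convex hulls. -/
theorem polyHull2_union_subset {K L : Set (ℂ × ℂ)} (hK : IsCompact K) (hL : IsCompact L) {k : ℝ}
    (hk : 0 ≤ k) {p : MvPolynomial (Fin 2) ℂ} (hpK : ∀ w ∈ K, 0 ≤ MvPolynomial.eval (coords w) p)
    (hpL : ∀ w ∈ L, MvPolynomial.eval (coords w) p ∈ sector k)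
    (hzero : ∀ w ∈ K, MvPolynomial.eval (coords w) p = 0 → w ∈ L) :
    polyHull2 (K ∪ L) ⊆ polyHull2 K ∪ polyHull2 L := fun z hz => by
  have : CompactSpace ↥(K ∪ L) := isCompact_iff_compactSpace.mp (hK.union hL)
  obtain ⟨φ, hφ⟩ := exists_algHom_polyAlgebra_of_mem_polyHull2 hz
  have hmem : ∀ S : Set (ℂ × ℂ), IsCompact S → DominatedOn φ {w | (w : ℂ × ℂ) ∈ S} →
      z ∈ polyHull2 S := fun S hS h => (mem_polyHull2_iff hS).mpr fun f m hm hf => by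
    rw [← hφ]
    exact h _ m hm fun w hw => (polyRestrict_apply f w).symm ▸ hf w hw
  refine (dominatedOn_or_dominatedOn φ hk (polyRestrict_mem_polyAlgebra p) ?_ ?_ ?_ ?_).imp
    (hmem K hK) (hmem L hL)
  · exact Set.eq_univ_of_forall fun w => w.2
  · exact fun w hw => (polyRestrict_apply p w).symm ▸ hpK w hw
  · exact fun w hw => (polyRestrict_apply p w).symm ▸ hpL w hw
  · exact fun w hw hpw => hzero w hw (polyRestrict_apply p w ▸ hpw)

lemma PolyConvex2.union {K L : Set (ℂ × ℂ)} (hK : IsCompact K) (hL : IsCompact L)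
    (hKc : PolyConvex2 K) (hLc : PolyConvex2 L) {k : ℝ}
    (hk : 0 ≤ k) {p : MvPolynomial (Fin 2) ℂ} (hpK : ∀ w ∈ K, 0 ≤ MvPolynomial.eval (coords w) p)
    (hpL : ∀ w ∈ L, MvPolynomial.eval (coords w) p ∈ sector k)
    (hzero : ∀ w ∈ K, MvPolynomial.eval (coords w) p = 0 → w ∈ L) : PolyConvex2 (K ∪ L) :=
  (polyConvex2_iff_subset (hK.union hL)).mpr <|
    (polyHull2_union_subset hK hL hk hpK hpL hzero).trans
      (Set.union_subset_union hKc.subset hLc.subset)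

end PolynomialHull

section LocalConvexity

open scoped ComplexOrder

lemma polyConvex2_of_subset_plane0 {K : Set (ℂ × ℂ)} (hK : IsCompact K) (hKreal : K ⊆ plane0) :
    PolyConvex2 K := by
  refine (polyConvex2_iff_subset hK).mpr fun z hz => by_contra fun hzK => ?_
  -- On `ℝ²` the polynomial `q` is real and exceeds its value at `z`, which is `-|Im z|²`.
  let T : ℝ := z.1.im ^ 2 + z.2.im ^ 2
  let S : ℂ × ℂ → ℝ := fun w => (w.1.re - z.1.re) ^ 2 + (w.2.re - z.2.re) ^ 2
  let q : MvPolynomial (Fin 2) ℂ := (.X 0 - .C (z.1.re : ℂ)) ^ 2 + (.X 1 - .C (z.2.re : ℂ)) ^ 2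
  have hqz : MvPolynomial.eval (coords z) q = (-T : ℝ) := by
    have hsub : ∀ v : ℂ, v - v.re = v.im * I := fun v => by
      linear_combination -re_add_im v
    simp only [q, T, map_add, map_sub, map_pow, MvPolynomial.eval_X, MvPolynomial.eval_C,
      coords_zero, coords_one, hsub, mul_pow, I_sq]
    push_cast
    ring
  have hqK : ∀ w ∈ K, MvPolynomial.eval (coords w) q = S w := fun w hw => by
    obtain ⟨x, y, rfl⟩ := hKreal hw
    simp [q, S]
  have hSpos : ∀ w ∈ K, -T < S w := fun w hw => by
    obtain ⟨x, y, rfl⟩ := hKreal hw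
    have hdist : S (x, y) + T = normSq (x - z.1) + normSq (y - z.2) := by
      simp only [S, T, normSq_apply, sub_re, sub_im, ofReal_re, ofReal_im]
      ring
    by_contra! hle
    have hx : normSq (x - z.1) = 0 := by linarith [normSq_nonneg (x - z.1), normSq_nonneg (y - z.2)]
    have hy : normSq (y - z.2) = 0 := by linarith [normSq_nonneg (x - z.1), normSq_nonneg (y - z.2)]
    rw [normSq_eq_zero, sub_eq_zero] at hx hy
    exact hzK ((show ((x : ℂ), (y : ℂ)) = z from Prod.ext hx hy) ▸ hw)
  obtain ⟨δ, hδT, hδ⟩ := hK.exists_forall_le' (f := S) (by fun_prop) hSpos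
  obtain ⟨M, hM⟩ := (hK.image (f := S) (by fun_prop)).bddAbove
  let N : ℝ := max M δ
  have hbound := (mem_polyHull2_iff hK).mp hz (.C (N : ℂ) - q) (N - δ)
    (sub_nonneg.mpr (le_max_right M δ)) fun w hw => by
      rw [map_sub, MvPolynomial.eval_C, hqK w hw, ← ofReal_sub, norm_real, Real.norm_of_nonneg]
      · exact sub_le_sub_left (hδ w hw) N
      · exact sub_nonneg.mpr ((hM (Set.mem_image_of_mem S hw)).trans (le_max_left M δ))
  rw [map_sub, MvPolynomial.eval_C, hqz, ← ofReal_sub, norm_real] at hbound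
  linarith [le_abs_self (N - -T), Real.norm_eq_abs (N - -T)]

lemma isCompact_eClosedBall (r : ℝ) : IsCompact (eClosedBall r) := by
  refine Metric.isCompact_of_isClosed_isBounded (isClosed_le (by fun_prop) continuous_const)
    (isBounded_iff_forall_norm_le.mpr ⟨|r|, fun z hz => norm_prod_le_iff.mpr ⟨?_, ?_⟩⟩)
  · rw [← abs_norm]
    exact sq_le_sq.mp ((le_add_of_nonneg_right (sq_nonneg _)).trans hz)
  · rw [← abs_norm]
    exact sq_le_sq.mp ((le_add_of_nonneg_left (sq_nonneg _)).trans hz)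

lemma isClosed_plane0 : IsClosed plane0 := by
  have hplane : plane0 = {z | z.1.im = 0} ∩ {z | z.2.im = 0} := by
    ext ⟨z, w⟩
    refine ⟨by rintro ⟨x, y, h⟩; simp_all, fun ⟨hz, hw⟩ => ⟨z.re, w.re, ?_⟩⟩
    exact Prod.ext (Complex.ext rfl hz) (Complex.ext rfl hw)
  rw [hplane]
  exact (isClosed_eq (by fun_prop) continuous_const).inter
    (isClosed_eq (by fun_prop) continuous_const)

theorem LocPolyConvexAt0.plane0_union {E : Set (ℂ × ℂ)} (hE : LocPolyConvexAt0 E) (h0 : 0 ∈ E)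
    {k : ℝ} (hk : 0 ≤ k) {p : MvPolynomial (Fin 2) ℂ}
    (hp : ∀ w ∈ plane0, 0 ≤ MvPolynomial.eval (coords w) p)
    (hzero : ∀ w ∈ plane0, MvPolynomial.eval (coords w) p = 0 → w = 0)
    (hpE : ∀ w ∈ E, MvPolynomial.eval (coords w) p ∈ sector k) :
    LocPolyConvexAt0 (plane0 ∪ E) := by
  obtain ⟨r, hr, hEr⟩ := hE
  have hEcompact : IsCompact (E ∩ eClosedBall r) :=
    (isCompact_eClosedBall r).of_isClosed_subset (hEr ▸ isClosed_polyHull2 _) Set.inter_subset_right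
  have hcompact : IsCompact (plane0 ∩ eClosedBall r) :=
    (isCompact_eClosedBall r).inter_left isClosed_plane0
  refine ⟨r, hr, ?_⟩
  rw [Set.union_inter_distrib_right]
  refine PolyConvex2.union hcompact hEcompact
    (polyConvex2_of_subset_plane0 hcompact Set.inter_subset_left) hEr hk
    (fun w hw => hp w hw.1) (fun w hw => hpE w hw.1) fun w hw hpw => ?_
  have hw0 := hzero w hw.1 hpw
  exact ⟨hw0 ▸ h0, hw.2⟩

end LocalConvexity

section Quadric

open Matrix
open scoped ComplexOrder

lemma posDef_of_isSymm_of_det_pos {S : Matrix (Fin 2) (Fin 2) ℝ} (hS : S.IsSymm)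
    (h00 : 0 < S 0 0) (hdet : 0 < S.det) : S.PosDef := by
  refine .of_dotProduct_mulVec_pos (by rwa [IsHermitian, conjTranspose_eq_transpose_of_trivial])
    fun v hv => ?_
  have hsquare : S 0 0 * (star v ⬝ᵥ S *ᵥ v) =
      (S 0 0 * v 0 + S 0 1 * v 1) ^ 2 + S.det * v 1 ^ 2 := by
    simp only [det_fin_two, dotProduct, mulVec, Fin.sum_univ_two, star_trivial]
    linear_combination (S 0 0 * v 0 * v 1 + S 0 1 * v 1 ^ 2) * hS.apply 0 1
  refine pos_of_mul_pos_right (hsquare ▸ ?_) h00.le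
  rcases eq_or_ne (v 1) 0 with h1 | h1
  · have h0 : v 0 ≠ 0 := fun h0 => hv (funext (Fin.forall_fin_two.mpr ⟨h0, h1⟩))
    rw [h1, mul_zero, add_zero]
    positivity
  · positivity

lemma posDef_or_neg_posDef_of_det_pos {S : Matrix (Fin 2) (Fin 2) ℝ} (hS : S.IsSymm)
    (hdet : 0 < S.det) : S.PosDef ∨ (-S).PosDef := by
  have hsymm : S 1 0 = S 0 1 := hS.apply 0 1
  rcases lt_trichotomy (S 0 0) 0 with h | h | h
  · right
    refine posDef_of_isSymm_of_det_pos hS.neg (by simpa using h) ?_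
    simpa [det_neg] using hdet
  · rw [det_fin_two, h, hsymm] at hdet
    nlinarith
  · exact .inl (posDef_of_isSymm_of_det_pos hS h hdet)

lemma isSymm_rotation_mul_iff {R : Type*} [CommRing R] {M : Matrix (Fin 2) (Fin 2) R} :
    (!![0, 1; -1, 0] * M).IsSymm ↔ M.trace = 0 := by
  rw [M.eta_fin_two, mul_fin_two, IsSymm.ext_iff, trace_fin_two_of]
  simp only [Fin.forall_fin_two, of_apply, cons_val', cons_val_fin_one, cons_val_zero, cons_val_one]
  grind

lemma exists_posDef_isSymm_mul_of_det_commutator_pos {A₁ A₂ : Matrix (Fin 2) (Fin 2) ℝ}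
    (h : 0 < (A₁ * A₂ - A₂ * A₁).det) :
    ∃ B : Matrix (Fin 2) (Fin 2) ℝ, B.PosDef ∧ (B * A₁).IsSymm ∧ (B * A₂).IsSymm := by
  let S := !![0, 1; -1, 0] * (A₁ * A₂ - A₂ * A₁)
  have hS : S.IsSymm := isSymm_rotation_mul_iff.mpr (by
    rw [trace_sub, trace_mul_comm, sub_self])
  have hS₁ : (S * A₁).IsSymm := by
    rw [Matrix.mul_assoc, isSymm_rotation_mul_iff, Matrix.sub_mul, trace_sub, Matrix.mul_assoc A₁,
      trace_mul_comm A₁, sub_self]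
  have hS₂ : (S * A₂).IsSymm := by
    rw [Matrix.mul_assoc, isSymm_rotation_mul_iff, Matrix.sub_mul, trace_sub, trace_mul_comm,
      Matrix.mul_assoc A₂, sub_self]
  have hdet : 0 < S.det := by
    rw [det_mul, det_fin_two_of]
    linarith
  rcases posDef_or_neg_posDef_of_det_pos hS hdet with hpos | hneg
  · exact ⟨S, hpos, hS₁, hS₂⟩
  · exact ⟨-S, hneg, by rw [Matrix.neg_mul]; exact hS₁.neg, by rw [Matrix.neg_mul]; exact hS₂.neg⟩

/-- The quadratic form `∑ Bᵢⱼ zᵢ zⱼ` on `ℂ²` with real coefficient matrix `B`, as a polynomial. -/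
noncomputable def quadric (B : Matrix (Fin 2) (Fin 2) ℝ) : MvPolynomial (Fin 2) ℂ :=
  ∑ i, ∑ j, .C (B i j : ℂ) * .X i * .X j

lemma eval_quadric_add_I_mul {B : Matrix (Fin 2) (Fin 2) ℝ} (hB : B.IsSymm) (u v : Fin 2 → ℝ) :
    MvPolynomial.eval (coords (u 0 + I * v 0, u 1 + I * v 1)) (quadric B) =
      (u ⬝ᵥ B *ᵥ u - v ⬝ᵥ B *ᵥ v : ℝ) + (2 * (v ⬝ᵥ B *ᵥ u) : ℝ) * I := by
  simp only [quadric, dotProduct, mulVec, Fin.sum_univ_two, hB.apply 0 1, map_add, map_mul,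
    MvPolynomial.eval_C, MvPolynomial.eval_X, coords_zero, coords_one]
  push_cast
  linear_combination (B 0 0 * v 0 ^ 2 + 2 * B 0 1 * v 0 * v 1 + B 1 1 * v 1 ^ 2 : ℂ) * I_sq

lemma eval_quadric_ofReal (B : Matrix (Fin 2) (Fin 2) ℝ) (x y : ℝ) :
    MvPolynomial.eval (coords (x, y)) (quadric B) = (![x, y] ⬝ᵥ B *ᵥ ![x, y] : ℝ) := by
  simp only [quadric, dotProduct, mulVec, Fin.sum_univ_two, map_add, map_mul, MvPolynomial.eval_C,
    MvPolynomial.eval_X, coords_zero, coords_one, cons_val_zero, cons_val_one]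
  push_cast
  ring

lemma mul_self_eq_trace_smul_sub_det_smul_one {R : Type*} [CommRing R]
    (A : Matrix (Fin 2) (Fin 2) R) : A * A = A.trace • A - A.det • 1 := by
  rcases subsingleton_or_nontrivial R with _ | _
  · exact Subsingleton.elim _ _
  have h := A.aeval_self_charpoly
  simp only [charpoly_fin_two, map_add, map_sub, map_mul, map_pow, Polynomial.aeval_X,
    Polynomial.aeval_C, Algebra.algebraMap_eq_smul_one, smul_mul_assoc, one_mul] at h
  rw [← sq, ← sub_eq_zero, ← h]
  abel

lemma mulVec_dotProduct_mulVec_mulVec {R : Type*} [CommRing R] {A B : Matrix (Fin 2) (Fin 2) R}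
    (hB : B.IsSymm) (hBA : (B * A).IsSymm) (v : Fin 2 → R) :
    (A *ᵥ v) ⬝ᵥ B *ᵥ (A *ᵥ v) = A.trace * (v ⬝ᵥ (B * A) *ᵥ v) - A.det * (v ⬝ᵥ B *ᵥ v) := by
  have hadjoint : Aᵀ * B = B * A := by rw [← hBA.eq, transpose_mul, hB.eq]
  calc (A *ᵥ v) ⬝ᵥ B *ᵥ (A *ᵥ v)
      = v ⬝ᵥ (Aᵀ * (B * A)) *ᵥ v := by
        rw [← mulVec_mulVec, ← mulVec_mulVec, dotProduct_mulVec v, vecMul_transpose]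
    _ = v ⬝ᵥ (A.trace • (B * A) - A.det • B) *ᵥ v := by
        rw [← Matrix.mul_assoc, hadjoint, Matrix.mul_assoc,
          mul_self_eq_trace_smul_sub_det_smul_one, Matrix.mul_sub, Matrix.mul_smul,
          Matrix.mul_smul, Matrix.mul_one]
    _ = A.trace * (v ⬝ᵥ (B * A) *ᵥ v) - A.det * (v ⬝ᵥ B *ᵥ v) := by
        rw [sub_mulVec, smul_mulVec, smul_mulVec, dotProduct_sub, dotProduct_smul,
          dotProduct_smul, smul_eq_mul, smul_eq_mul]

lemma exists_eval_quadric_eq_of_mem_planeOf {A B : Matrix (Fin 2) (Fin 2) ℝ} (hB : B.IsSymm)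
    (hBA : (B * A).IsSymm) {w : ℂ × ℂ} (hw : w ∈ planeOf A) :
    ∃ v : Fin 2 → ℝ, MvPolynomial.eval (coords w) (quadric B) =
      (A.trace * (v ⬝ᵥ (B * A) *ᵥ v) - (1 + A.det) * (v ⬝ᵥ B *ᵥ v) : ℝ) +
        (2 * (v ⬝ᵥ (B * A) *ᵥ v) : ℝ) * I := by
  obtain ⟨x, y, rfl⟩ := hw
  refine ⟨![x, y], ?_⟩
  set v := ![x, y]
  have hcoords : ∀ i, (A *ᵥ v) i = A i 0 * x + A i 1 * y := fun i => by
    simp [v, mulVec, dotProduct]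
  rw [← hcoords, ← hcoords]
  refine (eval_quadric_add_I_mul hB (A *ᵥ v) v).trans ?_
  rw [mulVec_dotProduct_mulVec_mulVec hB hBA, mulVec_mulVec]
  congr 2
  ring

lemma eval_quadric_nonneg {B : Matrix (Fin 2) (Fin 2) ℝ} (hB : B.PosSemidef) {w : ℂ × ℂ}
    (hw : w ∈ plane0) : 0 ≤ MvPolynomial.eval (coords w) (quadric B) := by
  obtain ⟨x, y, rfl⟩ := hw
  rw [eval_quadric_ofReal]
  exact zero_le_real.mpr (hB.dotProduct_mulVec_nonneg ![x, y])

lemma eq_zero_of_eval_quadric_eq_zero {B : Matrix (Fin 2) (Fin 2) ℝ} (hB : B.PosDef) {w : ℂ × ℂ}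
    (hw : w ∈ plane0) (hBw : MvPolynomial.eval (coords w) (quadric B) = 0) : w = 0 := by
  obtain ⟨x, y, rfl⟩ := hw
  rw [eval_quadric_ofReal, ofReal_eq_zero] at hBw
  have hxy : ![x, y] = 0 := by_contra fun h => (hB.dotProduct_mulVec_pos h).ne' hBw
  have hx : x = 0 := congrFun hxy 0
  have hy : y = 0 := congrFun hxy 1
  rw [hx, hy, ofReal_zero, Prod.mk_zero_zero]

lemma eval_quadric_mem_sector_of_mem_planeOf {A B : Matrix (Fin 2) (Fin 2) ℝ} (hB : B.PosSemidef)
    (hBA : (B * A).IsSymm) (hA : -1 ≤ A.det) {w : ℂ × ℂ} (hw : w ∈ planeOf A) :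
    MvPolynomial.eval (coords w) (quadric B) ∈ sector (|A.trace| / 2) := by
  have hBsymm : B.IsSymm := hB.isHermitian
  obtain ⟨v, hv⟩ := exists_eval_quadric_eq_of_mem_planeOf hBsymm hBA hw
  have hnonneg : 0 ≤ (1 + A.det) * (v ⬝ᵥ B *ᵥ v) :=
    mul_nonneg (by linarith) (hB.dotProduct_mulVec_nonneg v)
  rw [hv, ← mk_eq_add_mul_I]
  calc A.trace * (v ⬝ᵥ (B * A) *ᵥ v) - (1 + A.det) * (v ⬝ᵥ B *ᵥ v)
      ≤ |A.trace * (v ⬝ᵥ (B * A) *ᵥ v)| := (sub_le_self _ hnonneg).trans (le_abs_self _)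
    _ = |A.trace| / 2 * |2 * (v ⬝ᵥ (B * A) *ᵥ v)| := by
      rw [abs_mul, abs_mul, abs_two]
      ring

lemma zero_mem_planeOf (A : Matrix (Fin 2) (Fin 2) ℝ) : 0 ∈ planeOf A :=
  ⟨0, 0, by simp [Prod.ext_iff]⟩

end Quadric

theorem stmt_15_general (A₁ A₂ : Matrix (Fin 2) (Fin 2) ℝ)
    (hpair12 : LocPolyConvexAt0 (planeOf A₁ ∪ planeOf A₂))
    (hdet1 : -1 ≤ A₁.det) (hdet2 : -1 ≤ A₂.det)
    (hcomm : 0 < (A₁ * A₂ - A₂ * A₁).det) :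
    LocPolyConvexAt0 (plane0 ∪ planeOf A₁ ∪ planeOf A₂) := by
  obtain ⟨B, hB, hB₁, hB₂⟩ := exists_posDef_isSymm_mul_of_det_commutator_pos hcomm
  have hsector : ∀ w ∈ planeOf A₁ ∪ planeOf A₂, MvPolynomial.eval (coords w) (quadric B) ∈
      sector (max (|A₁.trace| / 2) (|A₂.trace| / 2)) := by
    rintro w (hw | hw)
    · exact sector_mono (le_max_left _ _)
        (eval_quadric_mem_sector_of_mem_planeOf hB.posSemidef hB₁ hdet1 hw)
    · exact sector_mono (le_max_right _ _)
        (eval_quadric_mem_sector_of_mem_planeOf hB.posSemidef hB₂ hdet2 hw)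
  rw [Set.union_assoc]
  exact hpair12.plane0_union (.inl (zero_mem_planeOf A₁)) (by positivity)
    (fun _ => eval_quadric_nonneg hB.posSemidef)
    (fun _ => eq_zero_of_eval_quadric_eq_zero hB) hsector

theorem stmt_15 (A₁ A₂ : Matrix (Fin 2) (Fin 2) ℝ)
    (htr0 : TotallyRealSet plane0)
    (htr1 : TotallyRealSet (planeOf A₁)) (htr2 : TotallyRealSet (planeOf A₂))
    (hpair01 : LocPolyConvexAt0 (plane0 ∪ planeOf A₁))
    (hpair02 : LocPolyConvexAt0 (plane0 ∪ planeOf A₂))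
    (hpair12 : LocPolyConvexAt0 (planeOf A₁ ∪ planeOf A₂))
    (habs1 : |A₁.det| ≤ 1) (habs2 : |A₂.det| ≤ 1)
    (hdet1 : A₁.det < 0) (hdet2 : A₂.det < 0)
    (hcomm : 0 < (A₁ * A₂ - A₂ * A₁).det) :
    LocPolyConvexAt0 (plane0 ∪ planeOf A₁ ∪ planeOf A₂) :=
  stmt_15_general A₁ A₂ hpair12 (abs_le.mp habs1).1 (abs_le.mp habs2).1 hcomm
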